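/- Let A be a tame central arrangement of n hyperplanes with rank ℓ in ℂ^m, for which the logarithmic complex 0 → D_ℓ^{S/C}(A)[0,−ℓ] → ⋯ → D_1^{S/C}(A)[0,−1] → D_0^{S/C}(A) → S/I(A) → 0 (with differential contraction along ω_a) is exact. Then the bigraded Hilbert series satisfies h(S/I; t, u) = P_A(t, −u)/(1−u)^n, where P_A(x, y) = Σ_{p=0}^{m} h(D_p(A); x) y^p. -/

import Mathlib

/- STATEMENT 15: for a (tame) central essential arrangement A of n hyperplanes
in ℂ^m for which the logarithmic complex
  0 → D_m^{S/C}(A)[0,−m] → ⋯ → D_1^{S/C}(A)[0,−1] → D_0^{S/C}(A) → S/I(A) → 0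
is exact, the bigraded Hilbert series satisfies
  h(S/I; t, u) = P_A(t, −u)/(1−u)^n,  P_A(x,y) = Σ_p h(D_p(A); x) y^p.
Formalization: D_p(A) is the module of logarithmic p-derivations (alternating
ℂ-multilinear maps R^p → R, Leibniz in each slot, with θ(f,g₂,…,g_p) ∈ (f));
D_p^{S/C} = D_p(A) ⊗ C.  Exactness is the hypothesis: in each bidegree (d,e)
there are linear maps making the sequence of (finite-dimensional) graded pieces
exact.  The conclusion is the coefficientwise form of the series identity:
  dim (S/I)_{(d,e)} = Σ_{p=0}^{m} (−1)^p · dim D_p(A)_d · dim C_{e−p}. -/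

open MvPolynomial

noncomputable section

variable (m n : ℕ)

abbrev Rm (m : ℕ) := MvPolynomial (Fin m) ℂ
abbrev Smn (m n : ℕ) := MvPolynomial (Fin m ⊕ Fin n) ℂ
abbrev Cn (n : ℕ) := MvPolynomial (Fin n) ℂ

/-- `θ` is a `p`-derivation: Leibniz rule in every slot. -/
def IsMultiDeriv {p : ℕ} (θ : AlternatingMap ℂ (Rm m) (Rm m) (Fin p)) : Prop :=
  ∀ (v : Fin p → Rm m) (i : Fin p) (a b : Rm m),
    θ (Function.update v i (a * b)) =
      a * θ (Function.update v i b) + b * θ (Function.update v i a)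

/-- The degree-`d` graded piece of the module `D_p(A)` of logarithmic
`p`-derivations of the arrangement with defining polynomial `f` (grading
normalized so that the Euler derivation has degree 0). -/
def DpPiece (f : Rm m) (p d : ℕ) :
    Submodule ℂ (AlternatingMap ℂ (Rm m) (Rm m) (Fin p)) where
  carrier := {θ | IsMultiDeriv m θ ∧
    (∀ (g : Fin p → Rm m) (i : Fin p), θ (Function.update g i f) ∈ Ideal.span {f}) ∧
    ∀ μ : Fin p → (Fin m →₀ ℕ),
      (θ fun i => monomial (μ i) 1).IsHomogeneous ((∑ i, (μ i).sum fun _ k => k) + d)}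
  zero_mem' := by
    refine ⟨fun v i a b => by simp, fun g i => by simp, fun μ => by
      simpa using MvPolynomial.isHomogeneous_zero _ _ _⟩
  add_mem' := by
    rintro a b ⟨ha1, ha2, ha3⟩ ⟨hb1, hb2, hb3⟩
    refine ⟨fun v i x y => ?_, fun g i => ?_, fun μ => ?_⟩
    · simp only [AlternatingMap.add_apply, ha1 v i x y, hb1 v i x y]; ring
    · simpa [AlternatingMap.add_apply] using Ideal.add_mem _ (ha2 g i) (hb2 g i)
    · simpa [AlternatingMap.add_apply] using (ha3 μ).add (hb3 μ)
  smul_mem' := by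
    rintro c θ ⟨h1, h2, h3⟩
    refine ⟨fun v i x y => ?_, fun g i => ?_, fun μ => ?_⟩
    · simp only [AlternatingMap.smul_apply, h1 v i x y, smul_add, mul_smul_comm]
    · simpa [AlternatingMap.smul_apply] using
        Submodule.smul_of_tower_mem (Ideal.span {f}) c (h2 g i)
    · simpa [AlternatingMap.smul_apply, MvPolynomial.smul_eq_C_mul] using
        (MvPolynomial.isHomogeneous_C (Fin m) c).mul (h3 μ)

/-- The graded piece of `C = ℂ[a₁,…,a_n]` in (possibly negative) degree `k`. -/
def CPiece (k : ℤ) : Submodule ℂ (Cn n) :=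
  if 0 ≤ k then homogeneousSubmodule (Fin n) ℂ k.toNat else ⊥

/-- The logarithmic ideal `I(A) ⊆ S`, generated by the contractions
`⟨θ, ω_a⟩ = Σᵢ aᵢ qᵢ` for derivations `θ` in the `x`-variables with
`θ(fᵢ) = qᵢ fᵢ`. -/
def logIdeal (f : Fin n → Rm m) : Ideal (Smn m n) :=
  Ideal.span {p : Smn m n | ∃ θ : Derivation ℂ (Smn m n) (Smn m n),
    (∀ j : Fin n, θ (X (Sum.inr j)) = 0) ∧
    ∃ q : Fin n → Smn m n,
      (∀ i, θ (rename Sum.inl (f i)) = q i * rename Sum.inl (f i)) ∧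
      p = ∑ i, X (Sum.inr i) * q i}

/-- The bigrading of `S`: `x`-variables have bidegree (1,0), `a`-variables
bidegree (0,1). -/
def wS : Fin m ⊕ Fin n → ℕ × ℕ := Sum.elim (fun _ => (1, 0)) (fun _ => (0, 1))

/-- The bigraded piece of `S/I(A)` in bidegree `(d,e)`. -/
def SIPiece (f : Fin n → Rm m) (d e : ℕ) :
    Submodule ℂ (Smn m n ⧸ logIdeal m n f) :=
  Submodule.map (Ideal.Quotient.mkₐ ℂ (logIdeal m n f)).toLinearMap
    (weightedHomogeneousSubmodule ℂ (wS m n) (d, e))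

/-- The bidegree-`(d,e)` piece of `D_p^{S/C}(A)[0,−p] = (D_p(A) ⊗ C)[0,−p]`,
namely `D_p(A)_d ⊗ C_{e−p}`. -/
def WPiece (f : Rm m) (p d e : ℕ) : Type :=
  TensorProduct ℂ (DpPiece m f p d) (CPiece n ((e : ℤ) - p))

instance (f : Rm m) (p d e : ℕ) : AddCommMonoid (WPiece m n f p d e) := by
  unfold WPiece; infer_instance

instance (f : Rm m) (p d e : ℕ) : Module ℂ (WPiece m n f p d e) := by
  unfold WPiece; infer_instance

theorem isMultiDeriv_eq_zero {p : ℕ} {θ : AlternatingMap ℂ (Rm m) (Rm m) (Fin p)}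
    (hθ : IsMultiDeriv m θ) (h : ∀ σ : Fin p → Fin m, θ (fun i => X (σ i)) = 0) : θ = 0 := by
  have key : ∀ (s : Finset (Fin p)) (v : Fin p → Rm m),
      (∀ i, i ∉ s → ∃ j, v i = X j) → θ v = 0 := by
    intro s
    induction s using Finset.induction_on with
    | empty =>
      intro v hv
      choose σ hσ using fun i => hv i (Finset.notMem_empty i)
      rw [funext hσ]
      exact h σ
    | insert i s _ ih =>
      intro v hv
      have hD : Derivation.mk' (θ.toMultilinearMap.toLinearMap v i)
          (fun a b => by simpa using hθ v i a b) = 0 := by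
        refine MvPolynomial.derivation_ext fun j => ?_
        refine ih (Function.update v i (X j)) fun k hk => ?_
        by_cases hki : k = i
        · subst hki
          exact ⟨j, by simp⟩
        · simpa [hki] using hv k (by simp [hki, hk])
      simpa using DFunLike.congr_fun hD (v i)
  ext1 v
  exact key Finset.univ v (by simp)

theorem finite_homogeneousSubmodule (d : ℕ) :
    Module.Finite ℂ (homogeneousSubmodule (Fin m) ℂ d) := by
  have hs : {c : Fin m →₀ ℕ | c.degree ≤ d}.Finite := Finsupp.finite_of_degree_le d
  have := hs.to_subtype
  have hfin : Module.Finite ℂ (restrictSupport ℂ {c : Fin m →₀ ℕ | c.degree ≤ d}) :=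
    Module.Finite.of_basis (basisRestrictSupport ℂ _)
  refine Submodule.finiteDimensional_of_le
    (S₂ := restrictSupport ℂ {c : Fin m →₀ ℕ | c.degree ≤ d}) fun q hq => ?_
  rw [mem_restrictSupport_iff]
  intro c hc
  have hq' := (mem_homogeneousSubmodule d q).1 hq
  exact (hq'.degree_eq_sum_deg_support hc).symm.le

theorem finite_CPiece (k : ℤ) : Module.Finite ℂ (CPiece n k) := by
  by_cases hk : 0 ≤ k
  · rw [CPiece, if_pos hk]
    exact finite_homogeneousSubmodule n _
  · rw [CPiece, if_neg hk]
    infer_instance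

theorem finite_DpPiece (f : Rm m) (p d : ℕ) : Module.Finite ℂ (DpPiece m f p d) := by
  have := finite_homogeneousSubmodule m (p + d)
  let Φ : DpPiece m f p d →ₗ[ℂ]
      ((Fin p → Fin m) → homogeneousSubmodule (Fin m) ℂ (p + d)) :=
    { toFun := fun θ σ => ⟨θ.1 fun i => X (σ i), by
        have := θ.2.2.2 fun i => Finsupp.single (σ i) 1
        simpa [X] using this⟩
      map_add' := fun _ _ => rfl
      map_smul' := fun _ _ => rfl }
  refine Module.Finite.of_injective Φ fun a b hab => ?_
  refine sub_eq_zero.1 (Subtype.ext (isMultiDeriv_eq_zero m (a - b).2.1 fun σ => ?_))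
  exact sub_eq_zero.2 (congrArg Subtype.val (congrFun hab σ))

theorem free_of_addCommMonoid (K M : Type*) [Field K] [AddCommMonoid M] [Module K M] :
    Module.Free K M :=
  let : AddCommGroup M := Module.addCommMonoidToAddCommGroup K
  Module.Free.of_divisionRing K M

/-- The Euler characteristic of a finite exact sequence of finite-dimensional spaces. -/
theorem finrank_eq_alternating_sum_of_exact {K V : Type*} {W : ℕ → Type*} [Field K]
    [AddCommGroup V] [Module K V] [∀ p, AddCommMonoid (W p)] [∀ p, Module K (W p)]
    [∀ p, Module.Finite K (W p)] (N : ℕ) (δ : ∀ p, W (p + 1) →ₗ[K] W p) (ε : W 0 →ₗ[K] V)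
    (hε : Function.Surjective ε) (h0 : Function.Exact (δ 0) ε)
    (hδ : ∀ p, Function.Exact (δ (p + 1)) (δ p)) (hN : Subsingleton (W (N + 1))) :
    (Module.finrank K V : ℤ) =
      ∑ p ∈ Finset.range (N + 1), (-1) ^ p * (Module.finrank K (W p) : ℤ) := by
  let (p : ℕ) : AddCommGroup (W p) := Module.addCommMonoidToAddCommGroup K
  have partial_sum : ∀ k : ℕ,
      ∑ p ∈ Finset.range (k + 1), (-1) ^ p * (Module.finrank K (W p) : ℤ) =
        Module.finrank K V + (-1) ^ k * Module.finrank K (LinearMap.range (δ k)) := by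
    intro k
    induction k with
    | zero =>
      have h := ε.finrank_range_add_finrank_ker
      rw [h0.linearMap_ker_eq, LinearMap.range_eq_top.2 hε, finrank_top] at h
      simp [← h]
    | succ k ih =>
      have h := (δ k).finrank_range_add_finrank_ker
      rw [(hδ k).linearMap_ker_eq] at h
      rw [Finset.sum_range_succ, ih, ← h]
      push_cast
      ring
  have hr : Module.finrank K (LinearMap.range (δ N)) = 0 := by
    have : δ N = 0 := LinearMap.ext fun x => by simp [Subsingleton.elim x 0]
    rw [this, LinearMap.range_zero, finrank_bot]
  rw [partial_sum, hr]
  simp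

/-- The defining identification of `WPiece` with a tensor product. -/
def wPieceEquiv (f : Rm m) (p d e : ℕ) :
    WPiece m n f p d e ≃ₗ[ℂ] TensorProduct ℂ (DpPiece m f p d) (CPiece n ((e : ℤ) - p)) :=
  LinearEquiv.refl ℂ (TensorProduct ℂ (DpPiece m f p d) (CPiece n ((e : ℤ) - p)))

/-- If the logarithmic complex is exact (as paper's Cor. 4.9: A tame), then
`h(S/I; t, u) = P_A(t, −u)/(1−u)^n`, coefficientwise. -/
theorem hilbert_series_of_exact_log_complex
    (f : Fin n → Rm m)
    (hf1 : ∀ i, (f i).IsHomogeneous 1) (hf0 : ∀ i, f i ≠ 0)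
    (hess : Module.finrank ℂ (Submodule.span ℂ (Set.range f)) = m)
    -- exactness of the logarithmic complex in each bidegree (d,e):
    (hexact : ∀ d e : ℕ,
      ∃ (δ : ∀ p : ℕ, WPiece m n (∏ i, f i) (p + 1) d e →ₗ[ℂ]
              WPiece m n (∏ i, f i) p d e)
        (ε : WPiece m n (∏ i, f i) 0 d e →ₗ[ℂ] SIPiece m n f d e),
        Function.Surjective ε ∧ Function.Exact (δ 0) ε ∧
        (∀ p, Function.Exact (δ (p + 1)) (δ p)) ∧
        ∀ p, m < p → Subsingleton (WPiece m n (∏ i, f i) p d e)) :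
    ∀ d e : ℕ,
      (Module.finrank ℂ (SIPiece m n f d e) : ℤ) =
        ∑ p ∈ Finset.range (m + 1),
          (-1) ^ p * (Module.finrank ℂ (DpPiece m (∏ i, f i) p d) : ℤ) *
            (Module.finrank ℂ (CPiece n ((e : ℤ) - p)) : ℤ) := by
  intro d e
  obtain ⟨δ, ε, hε, h0, hδ, hN⟩ := hexact d e
  have hD := fun p => finite_DpPiece m (∏ i, f i) p d
  have hC := finite_CPiece n
  have (p : ℕ) : Module.Finite ℂ (WPiece m n (∏ i, f i) p d e) :=
    Module.Finite.equiv (wPieceEquiv m n (∏ i, f i) p d e).symm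
  rw [finrank_eq_alternating_sum_of_exact
    (W := fun p => WPiece m n (∏ i, f i) p d e) m δ ε hε h0 hδ (hN _ m.lt_succ_self)]
  refine Finset.sum_congr rfl fun p _ => ?_
  have := free_of_addCommMonoid ℂ (DpPiece m (∏ i, f i) p d)
  have := free_of_addCommMonoid ℂ (CPiece n ((e : ℤ) - p))
  rw [(wPieceEquiv m n (∏ i, f i) p d e).finrank_eq, Module.finrank_tensorProduct]
  push_cast
  ring
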